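/- Let b₁ be a nondegenerate symmetric bilinear form on sl(3,ℝ) satisfying b₁([A,X],Y) + b₁(X,[A,Y]) = 0 for all A, X, Y ∈ sl(3,ℝ), and let b₂ be a nondegenerate symmetric bilinear form on ℝ³ ⊕ (ℝ³)* satisfying b₂(A·u, w) + b₂(u, A·w) = 0 for all A ∈ sl(3,ℝ) and all u, w. Then there exist nonzero real numbers c₁, c₂ such that for all A, A′ ∈ sl(3,ℝ), v, v′ ∈ ℝ³ and q, q′ ∈ (ℝ³)*: c₁·b₁(A,A′) + c₂·b₂((v,q),(v′,q′)) = κ₄(j(A) + X_v + Y_q, j(A′) + X_{v′} + Y_{q′}), where κ₄ is the Killing form of sl(4,ℝ). -/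

import Mathlib

open Matrix

abbrev M33R := Matrix (Fin 3) (Fin 3) ℝ

/-- The block embedding `A ↦ [[A,0],[0,0]]` of 3×3 matrices into 4×4 matrices. -/
def jmat (A : M33R) : Matrix (Fin 4) (Fin 4) ℝ :=
  (Matrix.fromBlocks A 0 0 (0 : Matrix (Fin 1) (Fin 1) ℝ)).submatrix
    ⇑(@finSumFinEquiv 3 1).symm ⇑(@finSumFinEquiv 3 1).symm

/-- For `v ∈ ℝ³`, the matrix `X_v ∈ sl(4,ℝ)` with `(i,4)` entry `v i` and zeros elsewhere. -/
def XmatAux (v : Fin 3 → ℝ) : Matrix (Fin 4) (Fin 4) ℝ :=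
  (Matrix.fromBlocks 0 (Matrix.of fun i (_ : Fin 1) => v i) 0 0).submatrix
    ⇑(@finSumFinEquiv 3 1).symm ⇑(@finSumFinEquiv 3 1).symm

/-- For `q ∈ (ℝ³)*`, the matrix `Y_q ∈ sl(4,ℝ)` with `(4,j)` entry `q (e j)`. -/
def YmatAux (q : Module.Dual ℝ (Fin 3 → ℝ)) : Matrix (Fin 4) (Fin 4) ℝ :=
  (Matrix.fromBlocks 0 0 (Matrix.of fun (_ : Fin 1) j => q (Pi.single j 1)) 0).submatrix
    ⇑(@finSumFinEquiv 3 1).symm ⇑(@finSumFinEquiv 3 1).symm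

lemma trace_submatrix_finSumFinEquiv (M : Matrix (Fin 3 ⊕ Fin 1) (Fin 3 ⊕ Fin 1) ℝ) :
    (M.submatrix ⇑(@finSumFinEquiv 3 1).symm ⇑(@finSumFinEquiv 3 1).symm).trace = M.trace := by
  unfold Matrix.trace Matrix.diag
  exact Fintype.sum_equiv finSumFinEquiv.symm _ _ (fun i => rfl)

lemma trace_fromBlocks' (A : Matrix (Fin 3) (Fin 3) ℝ) (B : Matrix (Fin 3) (Fin 1) ℝ)
    (C : Matrix (Fin 1) (Fin 3) ℝ) (D : Matrix (Fin 1) (Fin 1) ℝ) :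
    (Matrix.fromBlocks A B C D).trace = A.trace + D.trace := by
  unfold Matrix.trace Matrix.diag
  simp [Fintype.sum_sum_type, Matrix.fromBlocks]

/-- `j : sl(3,ℝ) → sl(4,ℝ)`. -/
def jsl (A : LieAlgebra.SpecialLinear.sl (Fin 3) ℝ) : LieAlgebra.SpecialLinear.sl (Fin 4) ℝ :=
  ⟨jmat A.1, by
    have hA : Matrix.trace (A.1) = 0 := A.2
    show Matrix.trace (jmat A.1) = 0
    rw [jmat, trace_submatrix_finSumFinEquiv, trace_fromBlocks', hA]
    simp⟩

/-- `X_v` as an element of `sl(4,ℝ)`. -/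
def Xsl (v : Fin 3 → ℝ) : LieAlgebra.SpecialLinear.sl (Fin 4) ℝ :=
  ⟨XmatAux v, by
    show Matrix.trace (XmatAux v) = 0
    rw [XmatAux, trace_submatrix_finSumFinEquiv, trace_fromBlocks']
    simp⟩

/-- `Y_q` as an element of `sl(4,ℝ)`. -/
def Ysl (q : Module.Dual ℝ (Fin 3 → ℝ)) : LieAlgebra.SpecialLinear.sl (Fin 4) ℝ :=
  ⟨YmatAux q, by
    show Matrix.trace (YmatAux q) = 0
    rw [YmatAux, trace_submatrix_finSumFinEquiv, trace_fromBlocks']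
    simp⟩

/-- The module `ℝ³ ⊕ (ℝ³)*`. -/
abbrev Vmod : Type := (Fin 3 → ℝ) × Module.Dual ℝ (Fin 3 → ℝ)

/-- The standard `sl(3,ℝ)`-module structure on `ℝ³ ⊕ (ℝ³)*`:
`A · (p, q) = (A p, −q ∘ A)`. -/
def slAct (A : M33R) (v : Vmod) : Vmod :=
  (A.mulVec v.1, -(v.2 ∘ₗ A.mulVecLin))

section Helpers

attribute [local instance] LieRing.ofAssociativeRing

abbrev sl3R := LieAlgebra.SpecialLinear.sl (Fin 3) ℝ

lemma trace_adad_gl (X Y : Matrix (Fin 4) (Fin 4) ℝ) :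
    LinearMap.trace ℝ _ ((LieAlgebra.ad ℝ (Matrix (Fin 4) (Fin 4) ℝ) X) ∘ₗ
      (LieAlgebra.ad ℝ (Matrix (Fin 4) (Fin 4) ℝ) Y))
      = 8 * (X * Y).trace - 2 * X.trace * Y.trace := by
  rw [LinearMap.trace_eq_matrix_trace ℝ (Matrix.stdBasis ℝ (Fin 4) (Fin 4))]
  have h : ∀ i j, ((LinearMap.toMatrix (Matrix.stdBasis ℝ (Fin 4) (Fin 4))
      (Matrix.stdBasis ℝ (Fin 4) (Fin 4))) ((LieAlgebra.ad ℝ (Matrix (Fin 4) (Fin 4) ℝ) X) ∘ₗ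
      (LieAlgebra.ad ℝ (Matrix (Fin 4) (Fin 4) ℝ) Y))) (i, j) (i, j)
      = ⁅X, ⁅Y, Matrix.single i j (1 : ℝ)⁆⁆ i j := by
    intro i j
    rw [LinearMap.toMatrix_apply, Matrix.stdBasis_eq_single]
    rfl
  have h2 : ∀ i j, ⁅X, ⁅Y, Matrix.single i j (1 : ℝ)⁆⁆ i j
      = (X * Y) i i - X i i * Y j j - Y i i * X j j + (Y * X) j j := by
    intro i j
    simp only [Ring.lie_def, mul_sub, sub_mul, Matrix.sub_apply]
    have e1 : (X * (Y * Matrix.single i j (1 : ℝ))) i j = (X * Y) i i := by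
      rw [← mul_assoc]; simp
    have e2 : (X * (Matrix.single i j (1 : ℝ) * Y)) i j = X i i * Y j j := by
      rw [← mul_assoc, Matrix.mul_apply, Finset.sum_eq_single j] <;> simp +contextual
    have e3 : (Y * Matrix.single i j (1 : ℝ) * X) i j = Y i i * X j j := by
      rw [Matrix.mul_apply, Finset.sum_eq_single j] <;> simp +contextual
    have e4 : (Matrix.single i j (1 : ℝ) * Y * X) i j = (Y * X) j j := by
      rw [mul_assoc]; simp
    rw [e1, e2, e3, e4]; ring
  rw [Matrix.trace, Fintype.sum_prod_type]
  simp only [Matrix.diag_apply, h, h2, Matrix.trace, Matrix.mul_apply, Fin.sum_univ_four]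
  ring

lemma killing_sl4 (X Y : LieAlgebra.SpecialLinear.sl (Fin 4) ℝ) :
    killingForm ℝ (LieAlgebra.SpecialLinear.sl (Fin 4) ℝ) X Y = 8 * (X.1 * Y.1).trace := by
  rw [killingForm_apply_apply]
  have hX : X.1.trace = 0 := X.2
  have h := trace_adad_gl X.1 Y.1
  rw [hX, mul_zero, zero_mul, sub_zero] at h
  rw [← h]
  have hm : ∀ Z : Matrix (Fin 4) (Fin 4) ℝ, ((LieAlgebra.ad ℝ (Matrix (Fin 4) (Fin 4) ℝ) X.1) ∘ₗ
      (LieAlgebra.ad ℝ (Matrix (Fin 4) (Fin 4) ℝ) Y.1)) Z ∈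
      (LieAlgebra.SpecialLinear.sl (Fin 4) ℝ).toSubmodule := by
    intro Z
    show Matrix.trace (⁅X.1, ⁅Y.1, Z⁆⁆) = 0
    rw [Ring.lie_def, Matrix.trace_sub, Matrix.trace_mul_comm, sub_self]
  rw [← LinearMap.trace_restrict_eq_of_forall_mem _ _ hm]
  rfl

/-- Projection from 3×3 matrices to trace-free matrices. -/
noncomputable def projSl : M33R →ₗ[ℝ] sl3R where
  toFun X := ⟨X - (X.trace / 3) • (1 : M33R), by
    show Matrix.trace (X - (X.trace / 3) • (1 : M33R)) = 0
    simp [Matrix.trace_sub, Matrix.trace_smul]⟩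
  map_add' X Y := by
    apply Subtype.ext
    show (X + Y) - ((X + Y).trace / 3) • (1 : M33R) =
      (X - (X.trace / 3) • (1 : M33R)) + (Y - (Y.trace / 3) • (1 : M33R))
    rw [Matrix.trace_add, add_div, add_smul]; abel
  map_smul' c X := by
    apply Subtype.ext
    show (c • X) - ((c • X).trace / 3) • (1 : M33R) = c • (X - (X.trace / 3) • (1 : M33R))
    rw [Matrix.trace_smul, smul_sub, smul_smul, smul_eq_mul, mul_div_assoc]

lemma projSl_coe (X : M33R) : (projSl X).1 = X - (X.trace / 3) • (1 : M33R) := rfl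

lemma projSl_self (A : sl3R) : projSl A.1 = A := by
  apply Subtype.ext
  have : A.1.trace = 0 := A.2
  rw [projSl_coe, this]; simp

lemma projSl_one : projSl (1 : M33R) = 0 := by
  apply Subtype.ext
  rw [projSl_coe]; simp

lemma projSl_lie (X Y : M33R) : projSl ⁅X, Y⁆ = ⁅projSl X, projSl Y⁆ := by
  apply Subtype.ext
  rw [LieSubalgebra.coe_bracket, projSl_coe, projSl_coe, projSl_coe]
  have : (⁅X, Y⁆ : M33R).trace = 0 := by
    rw [Ring.lie_def, Matrix.trace_sub, Matrix.trace_mul_comm, sub_self]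
  rw [this]
  simp only [Ring.lie_def, zero_div, zero_smul, sub_zero, mul_sub, sub_mul, smul_mul_assoc,
    mul_smul_comm, one_mul, mul_one, smul_sub]
  rw [smul_comm (X.trace / 3)]
  abel

lemma array_lemma (β : Fin 3 → Fin 3 → Fin 3 → Fin 3 → ℝ)
    (htr : ∀ k l, ∑ i, β i i k l = 0)
    (hinv : ∀ a b i j k l, (if b = i then β a j k l else 0) - (if j = a then β i b k l else 0)
      + (if b = k then β i j a l else 0) - (if l = a then β i j k b else 0) = 0) :
    ∃ c : ℝ, ∀ i j k l, β i j k l =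
      c * ((if j = k ∧ i = l then 1 else 0) - (if i = j ∧ k = l then 1 else 0) / 3) := by
  obtain ⟨S, hS⟩ : ∃ S : Fin 3 → Fin 3 → ℝ, ∀ j k, S j k = ∑ i, β i j k i := ⟨_, fun _ _ => rfl⟩
  have h1 : ∀ a j k l, 3 * β a j k l + β k j a l = if l = a then S j k else 0 := by
    intro a j k l
    have h := Finset.sum_congr (rfl : (Finset.univ : Finset (Fin 3)) = Finset.univ)
      (fun i _ => hinv a i i j k l)
    have ht := htr k l
    rw [hS]
    simp only [Finset.sum_add_distrib, Finset.sum_sub_distrib, Finset.sum_ite_eq',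
      Finset.mem_univ, if_true, Finset.sum_const_zero, Finset.sum_const, Finset.card_univ,
      Fintype.card_fin, nsmul_eq_mul] at h
    have h2 : (∑ i, if j = a then β i i k l else 0) = 0 := by
      split_ifs <;> simp [ht]
    rw [h2] at h
    split_ifs at h ⊢ <;> simp at h <;> linarith
  have h2 : ∀ a j k l, 8 * β a j k l = 3 * (if l = a then S j k else 0)
      - (if l = k then S j a else 0) := by
    intro a j k l
    have := h1 a j k l
    have := h1 k j a l
    linarith
  have h3 : ∀ l k, 3 * S l k = if l = k then ∑ i, S i i else 0 := by
    intro l k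
    have ht := htr k l
    have e : ∑ i, 8 * β i i k l = 0 := by rw [← Finset.mul_sum, ht, mul_zero]
    simp only [h2, Finset.sum_sub_distrib, ← Finset.mul_sum, Finset.sum_ite_eq,
      Finset.mem_univ, if_true] at e
    split_ifs at e ⊢ <;> (try simp only [Finset.sum_const_zero] at e) <;> linarith
  refine ⟨(∑ i, S i i) / 8, fun i j k l => ?_⟩
  have a1 := h2 i j k l
  have a2 := h3 j k
  have a3 := h3 j i
  generalize (∑ i, S i i) = t at *
  by_cases e1 : j = k <;> by_cases e2 : i = l <;> by_cases e3 : i = j <;> by_cases e4 : k = l <;>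
    simp only [e1, e2, e3, e4, eq_comm, if_true, if_false, and_true, and_false] at a1 a2 a3 ⊢ <;>
    grind

lemma b1_eq (b₁ : LinearMap.BilinForm ℝ sl3R)
    (hb₁inv : ∀ A X Y : sl3R, b₁ ⁅A, X⁆ Y + b₁ X ⁅A, Y⁆ = 0) :
    ∃ c : ℝ, ∀ A A' : sl3R, b₁ A A' = c * (A.1 * A'.1).trace := by
  obtain ⟨B, hB⟩ : ∃ B : LinearMap.BilinForm ℝ M33R, ∀ X Y, B X Y = b₁ (projSl X) (projSl Y) :=
    ⟨b₁.compl₁₂ projSl projSl, fun _ _ => rfl⟩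
  have hBinv : ∀ A X Y : M33R, B ⁅A, X⁆ Y + B X ⁅A, Y⁆ = 0 := by
    intro A X Y
    rw [hB, hB, projSl_lie, projSl_lie, hb₁inv]
  have hbr : ∀ a b i j : Fin 3, ⁅Matrix.single a b (1 : ℝ), Matrix.single i j (1 : ℝ)⁆ =
      (if b = i then Matrix.single a j (1 : ℝ) else 0)
        - (if j = a then Matrix.single i b (1 : ℝ) else 0) := by
    intro a b i j
    rw [Ring.lie_def]
    congr 1
    · split_ifs with h
      · subst h; simp
      · simp [h]
    · split_ifs with h
      · subst h; simp
      · simp [h]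
  obtain ⟨c, hc⟩ := array_lemma
    (fun i j k l => B (Matrix.single i j 1) (Matrix.single k l 1)) (by
      intro k l
      have : (∑ i, Matrix.single i i (1 : ℝ)) = (1 : M33R) := by
        ext i j; fin_cases i <;> fin_cases j <;> simp [Fin.sum_univ_three, Matrix.single]
      rw [← LinearMap.sum_apply, ← map_sum, this, hB, projSl_one]; simp) (by
      intro a b i j k l
      have := hBinv (Matrix.single a b 1) (Matrix.single i j 1) (Matrix.single k l 1)
      rw [hbr, hbr] at this
      simp only [map_sub, LinearMap.sub_apply] at this
      split_ifs at this ⊢ <;> (try simp only [map_zero, LinearMap.zero_apply] at this) <;>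
        linarith)
  refine ⟨c, fun A A' => ?_⟩
  have hA : A.1.trace = 0 := A.2
  have hA' : A'.1.trace = 0 := A'.2
  have e1 : b₁ A A' = B A.1 A'.1 := by rw [hB, projSl_self, projSl_self]
  have exp : ∀ X : M33R, X = ∑ i, ∑ j, X i j • Matrix.single i j (1 : ℝ) := by
    intro X
    conv_lhs => rw [Matrix.matrix_eq_sum_single X]
    simp
  have e2 : ∀ X Y : M33R, B X Y = c * ((X * Y).trace - X.trace * Y.trace / 3) := by
    intro X Y
    conv_lhs => rw [exp X, exp Y]
    simp only [map_sum, LinearMap.sum_apply, map_smul, LinearMap.smul_apply, hc]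
    simp [Fin.sum_univ_three, Matrix.trace, Matrix.mul_apply]
    ring
  rw [e1, e2, hA]; simp

lemma b2_eq (b₂ : LinearMap.BilinForm ℝ Vmod)
    (hb₂symm : ∀ u w, b₂ u w = b₂ w u)
    (hb₂inv : ∀ A : M33R, A.trace = 0 →
      ∀ u w : Vmod, b₂ (slAct A u) w + b₂ u (slAct A w) = 0) :
    ∃ c : ℝ, ∀ (v v' : Fin 3 → ℝ) (q q' : Module.Dual ℝ (Fin 3 → ℝ)),
      b₂ (v, q) (v', q') = c * (q' v + q v') := by
  obtain ⟨e, he⟩ : ∃ e : Fin 3 → Vmod, ∀ i, e i = (Pi.single i 1, 0) := ⟨_, fun _ => rfl⟩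
  obtain ⟨f, hf⟩ : ∃ f : Fin 3 → Vmod, ∀ i, f i = (0, LinearMap.proj i) := ⟨_, fun _ => rfl⟩
  have acte : ∀ a b i, slAct (Matrix.single a b 1) (e i) = if b = i then e a else 0 := by
    intro a b i
    rw [slAct, he, he]
    split_ifs with h
    · subst h
      ext j <;> simp [Matrix.single_apply, Pi.single_apply, eq_comm]
    · ext j <;> simp [Matrix.single_apply, h]
  have actf : ∀ a b i, slAct (Matrix.single a b 1) (f i) = if a = i then -f b else 0 := by
    intro a b i
    rw [slAct, hf, hf]
    split_ifs with h
    · subst h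
      ext j <;> simp [Matrix.single_apply, Pi.single_apply]
    · ext j <;> simp [h]
  have inv : ∀ a b, a ≠ b → ∀ u w, b₂ (slAct (Matrix.single a b 1) u) w
      + b₂ u (slAct (Matrix.single a b 1) w) = 0 := by
    intro a b hab
    exact hb₂inv _ (Matrix.trace_single_eq_of_ne a b 1 hab)
  have ex : ∀ a : Fin 3, ∃ b, a ≠ b := by decide
  have hee : ∀ i j, b₂ (e i) (e j) = 0 := by
    intro i j
    by_cases h : i = j
    · subst h
      obtain ⟨b, hb⟩ := ex i
      have := inv i b hb (e b) (e i)
      simpa [acte, hb.symm] using this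
    · have h1 := inv i j h (e j) (e j)
      have h2 := hb₂symm (e i) (e j)
      simp only [acte, if_true] at h1
      linarith
  have hff : ∀ i j, b₂ (f i) (f j) = 0 := by
    intro i j
    by_cases h : i = j
    · subst h
      obtain ⟨b, hb⟩ := ex i
      have := inv b i hb.symm (f b) (f i)
      simpa [actf, hb.symm] using this
    · have h1 := inv j i (Ne.symm h) (f j) (f j)
      have h2 := hb₂symm (f i) (f j)
      simp only [actf, if_true, map_neg, LinearMap.neg_apply] at h1
      linarith
  have hef : ∀ i j, i ≠ j → b₂ (e i) (f j) = 0 := by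
    intro i j h
    have := inv i j h (e j) (f j)
    simpa [acte, actf, h] using this
  have hdiag : ∀ i j, b₂ (e i) (f i) = b₂ (e j) (f j) := by
    intro i j
    by_cases h : i = j
    · rw [h]
    · have := inv i j h (e j) (f i)
      simp only [acte, actf, if_true, map_neg] at this
      linarith
  have hef' : ∀ i j, b₂ (e i) (f j) = if i = j then b₂ (e 0) (f 0) else 0 := by
    intro i j
    split_ifs with h
    · rw [← h]; exact hdiag _ _
    · exact hef i j h
  have hfe : ∀ i j, b₂ (f i) (e j) = if j = i then b₂ (e 0) (f 0) else 0 := by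
    intro i j
    rw [hb₂symm, hef']
  generalize b₂ (e 0) (f 0) = d at hef' hfe
  refine ⟨d, fun v v' q q' => ?_⟩
  have expv : ∀ v : Fin 3 → ℝ, v = ∑ i, v i • Pi.single i (1 : ℝ) := by
    intro v
    ext j; fin_cases j <;> simp [Fin.sum_univ_three]
  have expq : ∀ (q : Module.Dual ℝ (Fin 3 → ℝ)) (v : Fin 3 → ℝ),
      q v = ∑ i, v i * q (Pi.single i 1) := by
    intro q v
    conv_lhs => rw [expv v]
    simp
  have exp : ∀ (v : Fin 3 → ℝ) (q : Module.Dual ℝ (Fin 3 → ℝ)),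
      ((v, q) : Vmod) = ∑ i, (v i • e i + q (Pi.single i 1) • f i) := by
    intro v q
    apply Prod.ext
    · rw [Prod.fst_sum]
      simp only [he, hf]
      conv_lhs => rw [expv v]
      simp
    · rw [Prod.snd_sum]
      apply LinearMap.ext
      intro w
      simp only [he, hf]
      rw [expq q w]
      simp [mul_comm]
  rw [exp v q, exp v' q', expq q' v, expq q v']
  simp only [map_sum, LinearMap.sum_apply, map_smul, LinearMap.smul_apply, map_add,
    LinearMap.add_apply, hee, hff, hef', hfe]
  simp only [smul_eq_mul, mul_ite, mul_zero, zero_add, add_zero, Finset.sum_add_distrib,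
    Finset.sum_ite_eq, Finset.sum_ite_eq', Finset.mem_univ, if_true]
  simp only [Fin.sum_univ_three]
  ring

lemma trace_embed (A A' : sl3R) (v v' : Fin 3 → ℝ) (q q' : Module.Dual ℝ (Fin 3 → ℝ)) :
    ((jsl A + Xsl v + Ysl q).1 * (jsl A' + Xsl v' + Ysl q').1).trace =
      (A.1 * A'.1).trace + (q' v + q v') := by
  have h : ∀ (A : sl3R) (v : Fin 3 → ℝ) (q : Module.Dual ℝ (Fin 3 → ℝ)),
      (jsl A + Xsl v + Ysl q).1 = (Matrix.fromBlocks A.1 (Matrix.of fun i (_ : Fin 1) => v i)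
        (Matrix.of fun (_ : Fin 1) j => q (Pi.single j 1)) 0).submatrix
        ⇑(@finSumFinEquiv 3 1).symm ⇑(@finSumFinEquiv 3 1).symm := by
    intro A v q
    show jmat A.1 + XmatAux v + YmatAux q = _
    have e : (Matrix.fromBlocks A.1 (Matrix.of fun i (_ : Fin 1) => v i)
        (Matrix.of fun (_ : Fin 1) j => q (Pi.single j 1)) 0) =
        Matrix.fromBlocks A.1 0 0 (0 : Matrix (Fin 1) (Fin 1) ℝ)
        + Matrix.fromBlocks 0 (Matrix.of fun i (_ : Fin 1) => v i) 0 0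
        + Matrix.fromBlocks 0 0 (Matrix.of fun (_ : Fin 1) j => q (Pi.single j 1)) 0 := by
      simp [Matrix.fromBlocks_add]
    rw [e]
    rfl
  have expq : ∀ (q : Module.Dual ℝ (Fin 3 → ℝ)) (v : Fin 3 → ℝ),
      q v = ∑ i, v i * q (Pi.single i 1) := by
    intro q v
    have expv : v = ∑ i, v i • Pi.single i (1 : ℝ) := by
      ext j; fin_cases j <;> simp [Fin.sum_univ_three]
    conv_lhs => rw [expv]
    simp
  rw [h, h, Matrix.submatrix_mul_equiv, trace_submatrix_finSumFinEquiv,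
    Matrix.fromBlocks_multiply, trace_fromBlocks', Matrix.trace_add, expq q' v, expq q v']
  simp [Matrix.trace, Matrix.mul_apply, Fin.sum_univ_three]
  ring

end Helpers

/-- Any pair of invariant nondegenerate symmetric bilinear forms on `sl(3,ℝ)` and on
`ℝ³ ⊕ (ℝ³)*` can be rescaled so that their sum is the restriction of the Killing form of
`sl(4,ℝ)` under `(A, v, q) ↦ j(A) + X_v + Y_q`. -/
theorem rescaled_forms_eq_killingForm_sl4
    (b₁ : LinearMap.BilinForm ℝ ↥(LieAlgebra.SpecialLinear.sl (Fin 3) ℝ))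
    (hb₁symm : ∀ A A', b₁ A A' = b₁ A' A)
    (hb₁nondeg : ∀ A, (∀ A', b₁ A A' = 0) → A = 0)
    (hb₁inv : ∀ A X Y : LieAlgebra.SpecialLinear.sl (Fin 3) ℝ,
      b₁ ⁅A, X⁆ Y + b₁ X ⁅A, Y⁆ = 0)
    (b₂ : LinearMap.BilinForm ℝ Vmod)
    (hb₂symm : ∀ u w, b₂ u w = b₂ w u)
    (hb₂nondeg : ∀ u, (∀ w, b₂ u w = 0) → u = 0)
    (hb₂inv : ∀ A : M33R, A.trace = 0 →
      ∀ u w : Vmod, b₂ (slAct A u) w + b₂ u (slAct A w) = 0) :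
    ∃ c₁ c₂ : ℝ, c₁ ≠ 0 ∧ c₂ ≠ 0 ∧
      ∀ (A A' : LieAlgebra.SpecialLinear.sl (Fin 3) ℝ)
        (v v' : Fin 3 → ℝ) (q q' : Module.Dual ℝ (Fin 3 → ℝ)),
        c₁ * b₁ A A' + c₂ * b₂ (v, q) (v', q') =
          killingForm ℝ ↥(LieAlgebra.SpecialLinear.sl (Fin 4) ℝ)
            (jsl A + Xsl v + Ysl q) (jsl A' + Xsl v' + Ysl q') := by
  obtain ⟨c, hc⟩ := b1_eq b₁ hb₁inv
  obtain ⟨d, hd⟩ := b2_eq b₂ hb₂symm hb₂inv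
  have hc0 : c ≠ 0 := by
    rintro rfl
    have h := hb₁nondeg (projSl (Matrix.single 0 1 1)) (fun A' => by rw [hc, zero_mul])
    have h2 := congrArg (fun X : sl3R => X.1 0 1) h
    simp [projSl_coe] at h2
  have hd0 : d ≠ 0 := by
    rintro rfl
    have h := hb₂nondeg (Pi.single 0 1, 0) (fun w => by rw [← Prod.mk.eta (p := w), hd, zero_mul])
    have h2 := congrArg (fun X : Vmod => X.1 0) h
    simp at h2
  refine ⟨8 / c, 8 / d, by positivity, by positivity, fun A A' v v' q q' => ?_⟩
  rw [killing_sl4, trace_embed, hc, hd]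
  field_simp
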